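/- arXiv:2603.16470 — 5 statements merged into one kernel-verified Lean document; each statement's English description precedes it below -/
import Mathlib

section
/- (Performance Difference Lemma, visitation form.) For any two policies π and π̃ of a finite Markov decision process with discount factor γ ∈ [0,1), η(π̃) − η(π) = (1/(1−γ)) Σ_s ρ_{π̃}(s) Σ_a π̃(a|s) A^π(s,a), where ρ_{π̃} is the discounted state visitation frequency of π̃. -/
open Finset

noncomputable section

/-- Action-value function `Q^π(s,a) = r(s,a) + γ ∑_{s'} P(s'|s,a) V(s')`
(built from a given value function `V`). -/
def mdpQ {S A : Type*} [Fintype S] (P : S → A → S → ℝ) (r : S → A → ℝ) (γ : ℝ)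
    (V : S → ℝ) (s : S) (a : A) : ℝ :=
  r s a + γ * ∑ s', P s a s' * V s'

/-- Advantage function `A^π(s,a) = Q^π(s,a) − V^π(s)`. -/
def mdpAdv {S A : Type*} [Fintype S] (P : S → A → S → ℝ) (r : S → A → ℝ) (γ : ℝ)
    (V : S → ℝ) (s : S) (a : A) : ℝ :=
  mdpQ P r γ V s a - V s

/-- `V` solves the Bellman equation for policy `π`. -/
def IsBellman {S A : Type*} [Fintype S] [Fintype A] (P : S → A → S → ℝ)
    (r : S → A → ℝ) (γ : ℝ) (π : S → A → ℝ) (V : S → ℝ) : Prop :=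
  ∀ s, V s = ∑ a, π s a * (r s a + γ * ∑ s', P s a s' * V s')

/-- Policy performance `η(π) = ∑_s ρ₀(s) V^π(s)`. -/
def perf {S : Type*} [Fintype S] (ρ₀ V : S → ℝ) : ℝ := ∑ s, ρ₀ s * V s

/-- Time-`t` state distribution `μ_t^π`. -/
def stateDist {S A : Type*} [Fintype S] [Fintype A] (P : S → A → S → ℝ)
    (π : S → A → ℝ) (ρ₀ : S → ℝ) : ℕ → S → ℝ
  | 0 => ρ₀
  | t + 1 => fun s' => ∑ s, ∑ a, stateDist P π ρ₀ t s * π s a * P s a s'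

/-- Discounted state visitation frequency `ρ_π(s) = (1−γ) ∑_t γ^t μ_t^π(s)`. -/
def visitFreq {S A : Type*} [Fintype S] [Fintype A] (P : S → A → S → ℝ)
    (π : S → A → ℝ) (ρ₀ : S → ℝ) (γ : ℝ) (s : S) : ℝ :=
  (1 - γ) * ∑' t : ℕ, γ ^ t * stateDist P π ρ₀ t s

/-- Surrogate objective `L_π(π̃)`, built from the value function `V` of `π`. -/
def surrogate {S A : Type*} [Fintype S] [Fintype A] (P : S → A → S → ℝ)
    (r : S → A → ℝ) (γ : ℝ) (ρ₀ : S → ℝ) (π : S → A → ℝ) (V : S → ℝ)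
    (π' : S → A → ℝ) : ℝ :=
  perf ρ₀ V +
    (1 / (1 - γ)) * ∑ s, visitFreq P π ρ₀ γ s * ∑ a, π' s a * mdpAdv P r γ V s a

/-- Total variation distance between pmfs on a finite set. -/
def dTV {X : Type*} [Fintype X] (p q : X → ℝ) : ℝ := (1 / 2) * ∑ x, |p x - q x|

/-- `D_TV^max(π,π̃) = max_s D_TV(π(·|s) ‖ π̃(·|s))`. -/
def dTVmax {S A : Type*} [Fintype S] [Fintype A] (π π' : S → A → ℝ) : ℝ :=
  ⨆ s : S, dTV (π s) (π' s)

theorem stateDist_nonneg_sum {S A : Type*} [Fintype S] [Fintype A]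
    (P : S → A → S → ℝ) (ρ₀ : S → ℝ)
    (hP0 : ∀ s a s', 0 ≤ P s a s') (hP1 : ∀ s a, ∑ s', P s a s' = 1)
    (hρ0 : ∀ s, 0 ≤ ρ₀ s) (hρ1 : ∑ s, ρ₀ s = 1)
    (πt : S → A → ℝ)
    (hπt0 : ∀ s a, 0 ≤ πt s a) (hπt1 : ∀ s, ∑ a, πt s a = 1) (t : ℕ) :
    (∀ s, 0 ≤ stateDist P πt ρ₀ t s) ∧ ∑ s, stateDist P πt ρ₀ t s = 1 := by
  induction t with
  | zero => exact ⟨hρ0, hρ1⟩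
  | succ t ih =>
    refine ⟨fun s' => ?_, ?_⟩
    · exact Finset.sum_nonneg fun s _ => Finset.sum_nonneg fun a _ =>
        mul_nonneg (mul_nonneg (ih.1 s) (hπt0 s a)) (hP0 s a s')
    · show ∑ s', ∑ s, ∑ a, stateDist P πt ρ₀ t s * πt s a * P s a s' = 1
      rw [Finset.sum_comm, ← ih.2]
      refine Finset.sum_congr rfl fun s _ => ?_
      rw [Finset.sum_comm]
      simp_rw [← Finset.mul_sum, hP1, mul_one, ← Finset.mul_sum, hπt1, mul_one]

/-- Performance Difference Lemma, visitation form: for any two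
policies `π` and `π̃`,
`η(π̃) − η(π) = (1/(1−γ)) ∑_s ρ_{π̃}(s) ∑_a π̃(a|s) A^π(s,a)`. -/
theorem performance_difference_visitation
    {S A : Type*} [Fintype S] [Fintype A] [Nonempty S] [Nonempty A]
    (P : S → A → S → ℝ) (r : S → A → ℝ) (γ : ℝ) (ρ₀ : S → ℝ)
    (hP0 : ∀ s a s', 0 ≤ P s a s') (hP1 : ∀ s a, ∑ s', P s a s' = 1)
    (hγ0 : 0 ≤ γ) (hγ1 : γ < 1)
    (hρ0 : ∀ s, 0 ≤ ρ₀ s) (hρ1 : ∑ s, ρ₀ s = 1)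
    (π πt : S → A → ℝ)
    (hπ0 : ∀ s a, 0 ≤ π s a) (hπ1 : ∀ s, ∑ a, π s a = 1)
    (hπt0 : ∀ s a, 0 ≤ πt s a) (hπt1 : ∀ s, ∑ a, πt s a = 1)
    (V Vt : S → ℝ)
    (hV : IsBellman P r γ π V) (hVt : IsBellman P r γ πt Vt) :
    perf ρ₀ Vt - perf ρ₀ V =
      (1 / (1 - γ)) *
        ∑ s, visitFreq P πt ρ₀ γ s * ∑ a, πt s a * mdpAdv P r γ V s a := by
  have hμ := stateDist_nonneg_sum P ρ₀ hP0 hP1 hρ0 hρ1 πt hπt0 hπt1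
  have hsum : ∀ s, Summable fun t : ℕ => γ ^ t * stateDist P πt ρ₀ t s := by
    intro s
    refine Summable.of_nonneg_of_le (fun t => mul_nonneg (pow_nonneg hγ0 t) ((hμ t).1 s))
      (fun t => ?_) (summable_geometric_of_lt_one hγ0 hγ1)
    have h1 : stateDist P πt ρ₀ t s ≤ 1 := by
      rw [← (hμ t).2]
      exact Finset.single_le_sum (fun i _ => (hμ t).1 i) (Finset.mem_univ s)
    exact mul_le_of_le_one_right (pow_nonneg hγ0 t) h1
  obtain ⟨x, hx⟩ : ∃ x : S → ℝ, ∀ s, x s = ∑' t : ℕ, γ ^ t * stateDist P πt ρ₀ t s :=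
    ⟨_, fun _ => rfl⟩
  have hhas : ∀ s, HasSum (fun t : ℕ => γ ^ t * stateDist P πt ρ₀ t s) (x s) := by
    intro s
    rw [hx]
    exact (hsum s).hasSum
  have hflow : ∀ s', x s' = ρ₀ s' + γ * ∑ s, ∑ a, x s * πt s a * P s a s' := by
    intro s'
    rw [hx s', (hsum s').tsum_eq_zero_add]
    congr 1
    · simp [stateDist]
    · refine HasSum.tsum_eq ?_
      have h : HasSum (fun t : ℕ => γ * ∑ s, ∑ a,
          γ ^ t * stateDist P πt ρ₀ t s * πt s a * P s a s')
          (γ * ∑ s, ∑ a, x s * πt s a * P s a s') :=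
        (hasSum_sum fun s _ => hasSum_sum fun a _ =>
          ((hhas s).mul_right _).mul_right _).mul_left _
      have he : (fun t : ℕ => γ ^ (t + 1) * stateDist P πt ρ₀ (t + 1) s') =
          fun t : ℕ => γ * ∑ s, ∑ a,
            γ ^ t * stateDist P πt ρ₀ t s * πt s a * P s a s' := by
        funext t
        simp only [stateDist, pow_succ', mul_assoc, Finset.mul_sum]
      rw [he]
      exact h
  have hg : ∀ s, ∑ a, πt s a * mdpAdv P r γ V s a =
      (Vt s - V s) - γ * ∑ a, πt s a * ∑ s', P s a s' * (Vt s' - V s') := by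
    intro s
    have h1 : V s = ∑ a, πt s a * V s := by rw [← Finset.sum_mul, hπt1, one_mul]
    rw [hVt s]
    conv_rhs => rw [h1]
    simp only [mdpAdv, mdpQ]
    rw [Finset.mul_sum, ← Finset.sum_sub_distrib, ← Finset.sum_sub_distrib]
    refine Finset.sum_congr rfl fun a _ => ?_
    simp only [mul_sub, Finset.sum_sub_distrib]
    ring
  have hne : 1 - γ ≠ 0 := by linarith
  have hR : (1 / (1 - γ)) *
        ∑ s, visitFreq P πt ρ₀ γ s * ∑ a, πt s a * mdpAdv P r γ V s a
      = ∑ s, x s * ((Vt s - V s) - γ * ∑ a, πt s a * ∑ s', P s a s' * (Vt s' - V s')) := by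
    rw [Finset.mul_sum]
    refine Finset.sum_congr rfl fun s _ => ?_
    rw [hg, visitFreq, ← hx]
    field_simp
  have hsw : ∑ s', (γ * ∑ s, ∑ a, x s * πt s a * P s a s') * (Vt s' - V s')
      = ∑ s, x s * (γ * ∑ a, πt s a * ∑ s', P s a s' * (Vt s' - V s')) := by
    simp only [Finset.mul_sum, Finset.sum_mul]
    rw [Finset.sum_comm]
    refine Finset.sum_congr rfl fun s _ => ?_
    rw [Finset.sum_comm]
    refine Finset.sum_congr rfl fun a _ => Finset.sum_congr rfl fun s' _ => ?_
    ring
  have hL : ∑ s, x s * (Vt s - V s) = ∑ s, ρ₀ s * (Vt s - V s) +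
      ∑ s', (γ * ∑ s, ∑ a, x s * πt s a * P s a s') * (Vt s' - V s') := by
    rw [← Finset.sum_add_distrib]
    refine Finset.sum_congr rfl fun s _ => ?_
    rw [← add_mul, ← hflow]
  have hp : perf ρ₀ Vt - perf ρ₀ V = ∑ s, ρ₀ s * (Vt s - V s) := by
    simp only [perf, mul_sub, Finset.sum_sub_distrib]
  rw [hR, hp]
  simp_rw [mul_sub (x _) (Vt _ - V _)]
  rw [Finset.sum_sub_distrib, ← hsw, hL]
  ring
end
end

section
/- Let π and π̃ be two policies of a finite Markov decision process with the same transition kernel and initial distribution, and let α = D_TV^max(π, π̃). Then for every time step t ≥ 0, the total variation distance between the time-t state distributions satisfies D_TV(μ_t^{π̃} ‖ μ_t^π) ≤ t·α. -/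
open Finset

noncomputable section

/-- for two policies `π` and `π̃` of the same MDP with
`α = D_TV^max(π,π̃)`, the time-`t` state distributions satisfy
`D_TV(μ_t^{π̃} ‖ μ_t^π) ≤ t·α` for every `t ≥ 0`. -/
theorem state_distribution_tv_bound
    {S A : Type*} [Fintype S] [Fintype A] [Nonempty S] [Nonempty A]
    (P : S → A → S → ℝ) (ρ₀ : S → ℝ)
    (hP0 : ∀ s a s', 0 ≤ P s a s') (hP1 : ∀ s a, ∑ s', P s a s' = 1)
    (hρ0 : ∀ s, 0 ≤ ρ₀ s) (hρ1 : ∑ s, ρ₀ s = 1)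
    (π πt : S → A → ℝ)
    (hπ0 : ∀ s a, 0 ≤ π s a) (hπ1 : ∀ s, ∑ a, π s a = 1)
    (hπt0 : ∀ s a, 0 ≤ πt s a) (hπt1 : ∀ s, ∑ a, πt s a = 1)
    (α : ℝ) (hα : α = dTVmax π πt) :
    ∀ t : ℕ, dTV (stateDist P πt ρ₀ t) (stateDist P π ρ₀ t) ≤ t * α := by
  have hswap : ∀ g : S → A → ℝ, ∑ s', ∑ s, ∑ a, g s a * P s a s' = ∑ s, ∑ a, g s a := by
    intro g
    rw [Finset.sum_comm]
    refine Finset.sum_congr rfl fun s _ => ?_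
    rw [Finset.sum_comm]
    refine Finset.sum_congr rfl fun a _ => ?_
    rw [← Finset.mul_sum, hP1, mul_one]
  have hμ0 : ∀ t s, 0 ≤ stateDist P π ρ₀ t s := by
    intro t
    induction t with
    | zero => exact hρ0
    | succ t ih =>
      intro s'
      simp only [stateDist]
      exact Finset.sum_nonneg fun s _ => Finset.sum_nonneg fun a _ =>
        mul_nonneg (mul_nonneg (ih s) (hπ0 s a)) (hP0 s a s')
  have hμ1 : ∀ t, ∑ s, stateDist P π ρ₀ t s = 1 := by
    intro t
    induction t with
    | zero => exact hρ1
    | succ t ih =>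
      simp only [stateDist]
      rw [hswap (fun s a => stateDist P π ρ₀ t s * π s a)]
      simp only [← Finset.mul_sum, hπ1, mul_one, ih]
  have hle : ∀ s, ∑ a, |π s a - πt s a| ≤ 2 * α := by
    intro s
    have h : dTV (π s) (πt s) ≤ α := by
      rw [hα]
      exact le_ciSup (f := fun s => dTV (π s) (πt s)) (Set.finite_range _).bddAbove s
    unfold dTV at h
    linarith
  intro t
  induction t with
  | zero => simp [dTV, stateDist]
  | succ t ih =>
    have key : ∑ s', |stateDist P πt ρ₀ (t+1) s' - stateDist P π ρ₀ (t+1) s'| ≤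
        ∑ s, |stateDist P πt ρ₀ t s - stateDist P π ρ₀ t s| + 2 * α := by
      calc ∑ s', |stateDist P πt ρ₀ (t+1) s' - stateDist P π ρ₀ (t+1) s'|
          ≤ ∑ s', ∑ s, ∑ a, (|stateDist P πt ρ₀ t s - stateDist P π ρ₀ t s| * πt s a
              + stateDist P π ρ₀ t s * |π s a - πt s a|) * P s a s' := by
            refine Finset.sum_le_sum fun s' _ => ?_
            simp only [stateDist]
            rw [← Finset.sum_sub_distrib]
            refine (Finset.abs_sum_le_sum_abs _ _).trans (Finset.sum_le_sum fun s _ => ?_)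
            rw [← Finset.sum_sub_distrib]
            refine (Finset.abs_sum_le_sum_abs _ _).trans (Finset.sum_le_sum fun a _ => ?_)
            rw [← sub_mul, abs_mul, abs_of_nonneg (hP0 s a s')]
            refine mul_le_mul_of_nonneg_right ?_ (hP0 s a s')
            have e : stateDist P πt ρ₀ t s * πt s a - stateDist P π ρ₀ t s * π s a =
              (stateDist P πt ρ₀ t s - stateDist P π ρ₀ t s) * πt s a
                + stateDist P π ρ₀ t s * (πt s a - π s a) := by ring
            rw [e]
            refine (abs_add_le _ _).trans (le_of_eq ?_)
            rw [abs_mul, abs_mul, abs_of_nonneg (hπt0 s a), abs_of_nonneg (hμ0 t s),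
              abs_sub_comm (πt s a)]
        _ = ∑ s, (|stateDist P πt ρ₀ t s - stateDist P π ρ₀ t s|
              + stateDist P π ρ₀ t s * ∑ a, |π s a - πt s a|) := by
            rw [hswap (fun s a => |stateDist P πt ρ₀ t s - stateDist P π ρ₀ t s| * πt s a
              + stateDist P π ρ₀ t s * |π s a - πt s a|)]
            simp only [Finset.sum_add_distrib, ← Finset.mul_sum, hπt1, mul_one]
        _ ≤ ∑ s, (|stateDist P πt ρ₀ t s - stateDist P π ρ₀ t s|
              + stateDist P π ρ₀ t s * (2 * α)) :=
            Finset.sum_le_sum fun s _ =>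
              add_le_add le_rfl (mul_le_mul_of_nonneg_left (hle s) (hμ0 t s))
        _ = _ := by
            rw [Finset.sum_add_distrib, ← Finset.sum_mul, hμ1, one_mul]
    unfold dTV at ih ⊢
    push_cast
    linarith
end
end

section
/- Let π and π̃ be two policies of a finite Markov decision process, let α = D_TV^max(π, π̃), and let f : S → ℝ satisfy |f(s)| ≤ f_max for all states s. Then for every time step t ≥ 0, the difference of expectations of f under the time-t state distributions of the two policies is bounded: |Σ_s (μ_t^{π̃}(s) − μ_t^π(s)) f(s)| ≤ 2 f_max · t · α. -/
open Finset

noncomputable section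

lemma abs_avg_le {X : Type*} [Fintype X] (w x : X → ℝ) (c : ℝ) (h0 : ∀ i, 0 ≤ w i)
    (h1 : ∑ i, w i = 1) (hx : ∀ i, |x i| ≤ c) : |∑ i, w i * x i| ≤ c := by
  calc |∑ i, w i * x i| ≤ ∑ i, |w i * x i| := Finset.abs_sum_le_sum_abs _ _
    _ ≤ ∑ i, w i * c := by
        apply Finset.sum_le_sum
        intro i _
        rw [abs_mul, abs_of_nonneg (h0 i)]
        exact mul_le_mul_of_nonneg_left (hx i) (h0 i)
    _ = c := by rw [← Finset.sum_mul, h1, one_mul]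

lemma stateDist_step {S A : Type*} [Fintype S] [Fintype A] (P : S → A → S → ℝ)
    (π : S → A → ℝ) (ρ₀ : S → ℝ) (t : ℕ) (f : S → ℝ) :
    ∑ s', stateDist P π ρ₀ (t + 1) s' * f s' =
      ∑ s, stateDist P π ρ₀ t s * ∑ a, π s a * ∑ s', P s a s' * f s' := by
  simp only [stateDist, Finset.sum_mul, Finset.mul_sum]
  rw [Finset.sum_comm]
  refine Finset.sum_congr rfl fun s _ => ?_
  rw [Finset.sum_comm]
  refine Finset.sum_congr rfl fun a _ => Finset.sum_congr rfl fun s' _ => ?_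
  ring

lemma stateDist_nonneg {S A : Type*} [Fintype S] [Fintype A] (P : S → A → S → ℝ)
    (π : S → A → ℝ) (ρ₀ : S → ℝ) (hP0 : ∀ s a s', 0 ≤ P s a s') (hρ0 : ∀ s, 0 ≤ ρ₀ s)
    (hπ0 : ∀ s a, 0 ≤ π s a) (t : ℕ) : ∀ s, 0 ≤ stateDist P π ρ₀ t s := by
  induction t with
  | zero => exact hρ0
  | succ t ih =>
    intro s'
    exact Finset.sum_nonneg fun s _ => Finset.sum_nonneg fun a _ =>
      mul_nonneg (mul_nonneg (ih s) (hπ0 s a)) (hP0 s a s')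

lemma stateDist_sum {S A : Type*} [Fintype S] [Fintype A] (P : S → A → S → ℝ)
    (π : S → A → ℝ) (ρ₀ : S → ℝ) (hP1 : ∀ s a, ∑ s', P s a s' = 1) (hρ1 : ∑ s, ρ₀ s = 1)
    (hπ1 : ∀ s, ∑ a, π s a = 1) (t : ℕ) : ∑ s, stateDist P π ρ₀ t s = 1 := by
  induction t with
  | zero => exact hρ1
  | succ t ih =>
    have h := stateDist_step P π ρ₀ t (fun _ => 1)
    simp only [mul_one, hP1, hπ1, ih] at h
    exact h

/-- for two policies `π` and `π̃` with `α = D_TV^max(π,π̃)` and any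
`f : S → ℝ` with `|f(s)| ≤ f_max`, the difference of expectations of `f` under
the time-`t` state distributions is bounded by `2 f_max · t · α`. -/
theorem expectation_difference_bound
    {S A : Type*} [Fintype S] [Fintype A] [Nonempty S] [Nonempty A]
    (P : S → A → S → ℝ) (ρ₀ : S → ℝ)
    (hP0 : ∀ s a s', 0 ≤ P s a s') (hP1 : ∀ s a, ∑ s', P s a s' = 1)
    (hρ0 : ∀ s, 0 ≤ ρ₀ s) (hρ1 : ∑ s, ρ₀ s = 1)
    (π πt : S → A → ℝ)
    (hπ0 : ∀ s a, 0 ≤ π s a) (hπ1 : ∀ s, ∑ a, π s a = 1)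
    (hπt0 : ∀ s a, 0 ≤ πt s a) (hπt1 : ∀ s, ∑ a, πt s a = 1)
    (α : ℝ) (hα : α = dTVmax π πt)
    (f : S → ℝ) (fmax : ℝ) (hf : ∀ s, |f s| ≤ fmax) :
    ∀ t : ℕ,
      |∑ s, (stateDist P πt ρ₀ t s - stateDist P π ρ₀ t s) * f s| ≤
        2 * fmax * t * α := by
  intro t
  induction t generalizing f with
  | zero => simp [stateDist]
  | succ t ih =>
    have hPf : ∀ s a, |∑ s', P s a s' * f s'| ≤ fmax := fun s a =>
      abs_avg_le _ _ _ (hP0 s a) (hP1 s a) hf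
    have h1 := ih (fun s => ∑ a, πt s a * ∑ s', P s a s' * f s') (fun s =>
      abs_avg_le _ _ _ (hπt0 s) (hπt1 s) (hPf s))
    have hfm : 0 ≤ fmax := (abs_nonneg _).trans (hf (Classical.arbitrary S))
    have h2 : |∑ s, stateDist P π ρ₀ t s *
        ∑ a, (πt s a - π s a) * ∑ s', P s a s' * f s'| ≤ 2 * fmax * α := by
      apply abs_avg_le _ _ _ (stateDist_nonneg P π ρ₀ hP0 hρ0 hπ0 t)
        (stateDist_sum P π ρ₀ hP1 hρ1 hπ1 t)
      intro s
      have hs : dTV (π s) (πt s) ≤ α := by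
        rw [hα]
        exact le_ciSup (f := fun s => dTV (π s) (πt s)) (Set.finite_range _).bddAbove s
      unfold dTV at hs
      calc |∑ a, (πt s a - π s a) * ∑ s', P s a s' * f s'|
          ≤ ∑ a, |(πt s a - π s a) * ∑ s', P s a s' * f s'| :=
            Finset.abs_sum_le_sum_abs _ _
        _ ≤ ∑ a, |π s a - πt s a| * fmax := by
            apply Finset.sum_le_sum
            intro a _
            rw [abs_mul, abs_sub_comm]
            exact mul_le_mul_of_nonneg_left (hPf s a) (abs_nonneg _)
        _ = (∑ a, |π s a - πt s a|) * fmax := by rw [Finset.sum_mul]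
        _ ≤ (2 * α) * fmax := mul_le_mul_of_nonneg_right (by linarith) hfm
        _ = 2 * fmax * α := by ring
    have h3 : ∑ s, (stateDist P πt ρ₀ (t + 1) s - stateDist P π ρ₀ (t + 1) s) * f s =
        (∑ s, (stateDist P πt ρ₀ t s - stateDist P π ρ₀ t s) *
          ∑ a, πt s a * ∑ s', P s a s' * f s') +
        ∑ s, stateDist P π ρ₀ t s *
          ∑ a, (πt s a - π s a) * ∑ s', P s a s' * f s' := by
      simp only [sub_mul, Finset.sum_sub_distrib, mul_sub]
      rw [stateDist_step, stateDist_step]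
      ring
    rw [h3]
    refine (abs_add_le _ _).trans ?_
    push_cast
    linarith
end
end

section
/- Let π and π̃ be two policies of a finite Markov decision process with discount factor γ ∈ [0,1), let ε_max = max_{s,a} |A^π(s,a)|, and let α = D_TV^max(π, π̃). Then the gap between the true performance of π̃ and the surrogate objective built at π satisfies the linear bound |η(π̃) − L_π(π̃)| ≤ 2 ε_max γ α / (1−γ)². -/
open Finset

noncomputable section

/-- linear surrogate-gap bound: with `ε_max = max_{s,a} |A^π(s,a)|`
and `α = D_TV^max(π,π̃)`, we have `|η(π̃) − L_π(π̃)| ≤ 2 ε_max γ α / (1−γ)²`. -/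
theorem surrogate_gap_linear_bound
    {S A : Type*} [Fintype S] [Fintype A] [Nonempty S] [Nonempty A]
    (P : S → A → S → ℝ) (r : S → A → ℝ) (γ : ℝ) (ρ₀ : S → ℝ)
    (hP0 : ∀ s a s', 0 ≤ P s a s') (hP1 : ∀ s a, ∑ s', P s a s' = 1)
    (hγ0 : 0 ≤ γ) (hγ1 : γ < 1)
    (hρ0 : ∀ s, 0 ≤ ρ₀ s) (hρ1 : ∑ s, ρ₀ s = 1)
    (π πt : S → A → ℝ)
    (hπ0 : ∀ s a, 0 ≤ π s a) (hπ1 : ∀ s, ∑ a, π s a = 1)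
    (hπt0 : ∀ s a, 0 ≤ πt s a) (hπt1 : ∀ s, ∑ a, πt s a = 1)
    (V Vt : S → ℝ)
    (hV : IsBellman P r γ π V) (hVt : IsBellman P r γ πt Vt)
    (εmax α : ℝ)
    (hε : εmax = ⨆ p : S × A, |mdpAdv P r γ V p.1 p.2|)
    (hα : α = dTVmax π πt) :
    |perf ρ₀ Vt - surrogate P r γ ρ₀ π V πt| ≤
      2 * εmax * γ * α / (1 - γ) ^ 2 := by
  have h1γ : 0 < 1 - γ := by linarith
  -- state distributions
  have hμ0 : ∀ t s, 0 ≤ stateDist P π ρ₀ t s := by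
    intro t
    induction t with
    | zero => exact hρ0
    | succ t ih =>
      intro s'
      simp only [stateDist]
      exact Finset.sum_nonneg fun s _ => Finset.sum_nonneg fun a _ =>
        mul_nonneg (mul_nonneg (ih s) (hπ0 s a)) (hP0 s a s')
  have hμ1 : ∀ t, ∑ s, stateDist P π ρ₀ t s = 1 := by
    intro t
    induction t with
    | zero => exact hρ1
    | succ t ih =>
      simp only [stateDist]
      rw [Finset.sum_comm]
      rw [← ih]
      refine Finset.sum_congr rfl fun s _ => ?_
      rw [Finset.sum_comm]
      simp_rw [← Finset.mul_sum, hP1, mul_one, ← Finset.mul_sum, hπ1, mul_one]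
  have hμle : ∀ t s, stateDist P π ρ₀ t s ≤ 1 := by
    intro t s
    rw [← hμ1 t]
    exact Finset.single_le_sum (fun i _ => hμ0 t i) (Finset.mem_univ s)
  have hgeo := hasSum_geometric_of_lt_one hγ0 hγ1
  have hsum : ∀ s, Summable (fun t : ℕ => γ ^ t * stateDist P π ρ₀ t s) := by
    intro s
    refine Summable.of_nonneg_of_le (fun t => mul_nonneg (pow_nonneg hγ0 t) (hμ0 t s))
      (fun t => ?_) hgeo.summable
    exact mul_le_of_le_one_right (pow_nonneg hγ0 t) (hμle t s)
  obtain ⟨d, hd⟩ : ∃ d : S → ℝ, ∀ s, HasSum (fun t : ℕ => γ ^ t * stateDist P π ρ₀ t s) (d s) :=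
    ⟨_, fun s => (hsum s).hasSum⟩
  have hd0 : ∀ s, 0 ≤ d s := fun s =>
    (hd s).nonneg fun t => mul_nonneg (pow_nonneg hγ0 t) (hμ0 t s)
  have hd1 : ∑ s, d s = (1 - γ)⁻¹ := by
    have h := hasSum_sum (s := Finset.univ) fun s _ => hd s
    simp_rw [← Finset.mul_sum, hμ1, mul_one] at h
    exact h.unique hgeo
  have hflow : ∀ s', d s' = ρ₀ s' + γ * ∑ s, ∑ a, d s * π s a * P s a s' := by
    intro s'
    have h := hasSum_sum (s := Finset.univ) fun s _ =>
      hasSum_sum (s := Finset.univ) fun a _ => ((hd s).mul_right (π s a)).mul_right (P s a s')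
    have h2 := h.mul_left γ
    have h3 := (hasSum_nat_add_iff' 1).mpr (hd s')
    have hfe : (fun n : ℕ => γ ^ (n + 1) * stateDist P π ρ₀ (n + 1) s') = fun i : ℕ =>
        γ * ∑ s, ∑ a, γ ^ i * stateDist P π ρ₀ i s * π s a * P s a s' := by
      funext t
      simp only [stateDist, Finset.mul_sum]
      refine Finset.sum_congr rfl fun s _ => Finset.sum_congr rfl fun a _ => ?_
      ring
    rw [hfe] at h3
    have h4 := h3.unique h2
    simp [stateDist] at h4
    linarith
  -- the supremum bounds
  have hεb : ∀ s a, |mdpAdv P r γ V s a| ≤ εmax := by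
    intro s a
    rw [hε]
    exact le_ciSup (f := fun p : S × A => |mdpAdv P r γ V p.1 p.2|)
      (Set.finite_range _).bddAbove (s, a)
  have hαb : ∀ s, ∑ a, |π s a - πt s a| ≤ 2 * α := by
    intro s
    have : dTV (π s) (πt s) ≤ α := by
      rw [hα]
      exact le_ciSup (f := fun s : S => dTV (π s) (πt s)) (Set.finite_range _).bddAbove s
    unfold dTV at this
    linarith
  have hε0 : 0 ≤ εmax :=
    (abs_nonneg _).trans (hεb (Classical.arbitrary S) (Classical.arbitrary A))
  have hα0 : 0 ≤ α := by
    have := (Finset.sum_nonneg fun a _ => abs_nonneg _).trans (hαb (Classical.arbitrary S))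
    linarith
  obtain ⟨W, hW⟩ : ∃ W : S → ℝ, ∀ s, W s = Vt s - V s := ⟨_, fun _ => rfl⟩
  obtain ⟨g, hg⟩ : ∃ g : S → ℝ, ∀ s, g s = ∑ a, πt s a * mdpAdv P r γ V s a :=
    ⟨_, fun _ => rfl⟩
  obtain ⟨X, hX⟩ : ∃ X : S → A → ℝ, ∀ s a, X s a = ∑ s', P s a s' * W s' :=
    ⟨_, fun _ _ => rfl⟩
  have hgb : ∀ s, |g s| ≤ εmax := by
    intro s
    rw [hg]
    calc |∑ a, πt s a * mdpAdv P r γ V s a| ≤ ∑ a, |πt s a * mdpAdv P r γ V s a| :=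
          Finset.abs_sum_le_sum_abs _ _
      _ ≤ ∑ a, πt s a * εmax := by
          refine Finset.sum_le_sum fun a _ => ?_
          rw [abs_mul, abs_of_nonneg (hπt0 s a)]
          exact mul_le_mul_of_nonneg_left (hεb s a) (hπt0 s a)
      _ = εmax := by rw [← Finset.sum_mul, hπt1, one_mul]
  have hWeq : ∀ s, W s = g s + γ * ∑ a, πt s a * X s a := by
    intro s
    have e1 : ∀ a, X s a = ∑ s', P s a s' * Vt s' - ∑ s', P s a s' * V s' := by
      intro a
      rw [hX, ← Finset.sum_sub_distrib]
      refine Finset.sum_congr rfl fun s' _ => ?_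
      rw [hW]; ring
    have e2 : V s = ∑ a, πt s a * V s := by rw [← Finset.sum_mul, hπt1, one_mul]
    rw [hW, hVt s, hg, Finset.mul_sum, ← Finset.sum_add_distrib]
    nth_rewrite 1 [e2]
    rw [← Finset.sum_sub_distrib]
    refine Finset.sum_congr rfl fun a _ => ?_
    rw [e1]
    unfold mdpAdv mdpQ
    ring
  obtain ⟨s0, hs0⟩ := Finite.exists_max (fun s => |W s|)
  have hXb : ∀ s a, |X s a| ≤ |W s0| := by
    intro s a
    rw [hX]
    calc |∑ s', P s a s' * W s'| ≤ ∑ s', |P s a s' * W s'| := Finset.abs_sum_le_sum_abs _ _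
      _ ≤ ∑ s', P s a s' * |W s0| := by
          refine Finset.sum_le_sum fun s' _ => ?_
          rw [abs_mul, abs_of_nonneg (hP0 s a s')]
          exact mul_le_mul_of_nonneg_left (hs0 s') (hP0 s a s')
      _ = |W s0| := by rw [← Finset.sum_mul, hP1, one_mul]
  have hM : |W s0| ≤ εmax / (1 - γ) := by
    have h1 : |∑ a, πt s0 a * X s0 a| ≤ |W s0| := by
      calc |∑ a, πt s0 a * X s0 a| ≤ ∑ a, |πt s0 a * X s0 a| := Finset.abs_sum_le_sum_abs _ _
        _ ≤ ∑ a, πt s0 a * |W s0| := by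
            refine Finset.sum_le_sum fun a _ => ?_
            rw [abs_mul, abs_of_nonneg (hπt0 s0 a)]
            exact mul_le_mul_of_nonneg_left (hXb s0 a) (hπt0 s0 a)
        _ = |W s0| := by rw [← Finset.sum_mul, hπt1, one_mul]
    have h2 : |W s0| ≤ |g s0| + γ * |∑ a, πt s0 a * X s0 a| := by
      nth_rewrite 1 [hWeq s0]
      refine (abs_add_le _ _).trans ?_
      rw [abs_mul, abs_of_nonneg hγ0]
    have h3 := mul_le_mul_of_nonneg_left h1 hγ0
    rw [le_div_iff₀ h1γ]
    have := hgb s0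
    linarith
  -- the gap identity
  have hsur : surrogate P r γ ρ₀ π V πt = perf ρ₀ V + ∑ s, d s * g s := by
    unfold surrogate visitFreq
    congr 1
    rw [Finset.mul_sum]
    refine Finset.sum_congr rfl fun s _ => ?_
    rw [(hd s).tsum_eq, ← hg]
    field_simp
  have hsw : ∑ s', (∑ s, ∑ a, d s * π s a * P s a s') * W s'
      = ∑ s, d s * ∑ a, π s a * X s a := by
    simp_rw [hX, Finset.sum_mul, Finset.mul_sum]
    rw [Finset.sum_comm]
    refine Finset.sum_congr rfl fun s _ => ?_
    rw [Finset.sum_comm]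
    refine Finset.sum_congr rfl fun a _ => Finset.sum_congr rfl fun s' _ => ?_
    ring
  have hρW : ∑ s, ρ₀ s * W s = ∑ s, d s * W s - γ * ∑ s, d s * ∑ a, π s a * X s a := by
    rw [← hsw, Finset.mul_sum, ← Finset.sum_sub_distrib]
    refine Finset.sum_congr rfl fun s _ => ?_
    have := hflow s
    rw [show ρ₀ s = d s - γ * ∑ s_1, ∑ a, d s_1 * π s_1 a * P s_1 a s by linarith]
    ring
  have hgap : perf ρ₀ Vt - surrogate P r γ ρ₀ π V πt
      = γ * ∑ s, d s * ∑ a, (πt s a - π s a) * X s a := by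
    have e1 : perf ρ₀ Vt - perf ρ₀ V = ∑ s, ρ₀ s * W s := by
      unfold perf
      rw [← Finset.sum_sub_distrib]
      refine Finset.sum_congr rfl fun s _ => ?_
      rw [hW]; ring
    have e2 : ∑ s, d s * W s = ∑ s, d s * g s + γ * ∑ s, d s * ∑ a, πt s a * X s a := by
      rw [Finset.mul_sum, ← Finset.sum_add_distrib]
      refine Finset.sum_congr rfl fun s _ => ?_
      rw [hWeq s]; ring
    simp_rw [sub_mul, Finset.sum_sub_distrib, mul_sub, Finset.sum_sub_distrib]
    rw [hsur]
    linarith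
  have hin : ∀ s, |∑ a, (πt s a - π s a) * X s a| ≤ 2 * α * (εmax / (1 - γ)) := by
    intro s
    calc |∑ a, (πt s a - π s a) * X s a| ≤ ∑ a, |(πt s a - π s a) * X s a| :=
          Finset.abs_sum_le_sum_abs _ _
      _ ≤ ∑ a, |π s a - πt s a| * (εmax / (1 - γ)) := by
          refine Finset.sum_le_sum fun a _ => ?_
          rw [abs_mul, abs_sub_comm]
          exact mul_le_mul_of_nonneg_left ((hXb s a).trans hM) (abs_nonneg _)
      _ ≤ 2 * α * (εmax / (1 - γ)) := by
          rw [← Finset.sum_mul]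
          exact mul_le_mul_of_nonneg_right (hαb s) (div_nonneg hε0 h1γ.le)
  rw [hgap, abs_mul, abs_of_nonneg hγ0]
  have hout : |∑ s, d s * ∑ a, (πt s a - π s a) * X s a|
      ≤ (1 - γ)⁻¹ * (2 * α * (εmax / (1 - γ))) := by
    rw [← hd1, Finset.sum_mul]
    refine (Finset.abs_sum_le_sum_abs _ _).trans (Finset.sum_le_sum fun s _ => ?_)
    rw [abs_mul, abs_of_nonneg (hd0 s)]
    exact mul_le_mul_of_nonneg_left (hin s) (hd0 s)
  refine (mul_le_mul_of_nonneg_left hout hγ0).trans (le_of_eq ?_)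
  field_simp
end
end

section
/- Let π and π̃ be two policies of a finite Markov decision process with discount factor γ ∈ [0,1), let ε_max = max_{s,a} |A^π(s,a)|, and let α = D_TV^max(π, π̃). Then the gap between the true performance of π̃ and the surrogate objective built at π satisfies the quadratic bound |η(π̃) − L_π(π̃)| ≤ 4 ε_max γ α² / (1−γ)². -/
open Finset

noncomputable section

theorem aux_sd_nonneg {S A : Type*} [Fintype S] [Fintype A]
    (P : S → A → S → ℝ) (ρ₀ : S → ℝ) (π : S → A → ℝ)
    (hP0 : ∀ s a s', 0 ≤ P s a s') (hρ0 : ∀ s, 0 ≤ ρ₀ s) (hπ0 : ∀ s a, 0 ≤ π s a)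
    (t : ℕ) : ∀ s, 0 ≤ stateDist P π ρ₀ t s := by
  induction t with
  | zero => exact hρ0
  | succ t ih =>
    intro s'
    exact Finset.sum_nonneg fun s _ => Finset.sum_nonneg fun a _ =>
      mul_nonneg (mul_nonneg (ih s) (hπ0 s a)) (hP0 s a s')

theorem aux_sd_sum {S A : Type*} [Fintype S] [Fintype A]
    (P : S → A → S → ℝ) (ρ₀ : S → ℝ) (π : S → A → ℝ)
    (hP1 : ∀ s a, ∑ s', P s a s' = 1) (hρ1 : ∑ s, ρ₀ s = 1) (hπ1 : ∀ s, ∑ a, π s a = 1)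
    (t : ℕ) : ∑ s, stateDist P π ρ₀ t s = 1 := by
  induction t with
  | zero => exact hρ1
  | succ t ih =>
    have : ∑ s', stateDist P π ρ₀ (t+1) s' =
        ∑ s', ∑ s, ∑ a, stateDist P π ρ₀ t s * π s a * P s a s' := rfl
    rw [this, Finset.sum_comm]
    rw [← ih]
    refine Finset.sum_congr rfl fun s _ => ?_
    rw [Finset.sum_comm]
    simp_rw [← Finset.mul_sum, hP1, mul_one]
    rw [← Finset.mul_sum, hπ1, mul_one]

theorem aux_summable {S A : Type*} [Fintype S] [Fintype A]
    (P : S → A → S → ℝ) (γ : ℝ) (ρ₀ : S → ℝ) (π : S → A → ℝ)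
    (hP0 : ∀ s a s', 0 ≤ P s a s') (hP1 : ∀ s a, ∑ s', P s a s' = 1)
    (hγ0 : 0 ≤ γ) (hγ1 : γ < 1)
    (hρ0 : ∀ s, 0 ≤ ρ₀ s) (hρ1 : ∑ s, ρ₀ s = 1)
    (hπ0 : ∀ s a, 0 ≤ π s a) (hπ1 : ∀ s, ∑ a, π s a = 1) (s : S) :
    Summable fun t : ℕ => γ ^ t * stateDist P π ρ₀ t s := by
  refine Summable.of_nonneg_of_le
    (fun t => mul_nonneg (pow_nonneg hγ0 t) (aux_sd_nonneg P ρ₀ π hP0 hρ0 hπ0 t s)) (fun t => ?_)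
    (summable_geometric_of_lt_one hγ0 hγ1)
  have h : stateDist P π ρ₀ t s ≤ 1 := by
    rw [← aux_sd_sum P ρ₀ π hP1 hρ1 hπ1 t]
    exact Finset.single_le_sum (fun s _ => aux_sd_nonneg P ρ₀ π hP0 hρ0 hπ0 t s)
      (Finset.mem_univ s)
  exact mul_le_of_le_one_right (pow_nonneg hγ0 t) h

/-- existence of the discounted occupation vector with all its properties -/
theorem aux_occ {S A : Type*} [Fintype S] [Fintype A]
    (P : S → A → S → ℝ) (γ : ℝ) (ρ₀ : S → ℝ) (π : S → A → ℝ)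
    (hP0 : ∀ s a s', 0 ≤ P s a s') (hP1 : ∀ s a, ∑ s', P s a s' = 1)
    (hγ0 : 0 ≤ γ) (hγ1 : γ < 1)
    (hρ0 : ∀ s, 0 ≤ ρ₀ s) (hρ1 : ∑ s, ρ₀ s = 1)
    (hπ0 : ∀ s a, 0 ≤ π s a) (hπ1 : ∀ s, ∑ a, π s a = 1) :
    ∃ y : S → ℝ, (∀ s, visitFreq P π ρ₀ γ s = (1 - γ) * y s) ∧ (∀ s, 0 ≤ y s) ∧
      ∑ s, y s = (1 - γ)⁻¹ ∧
      ∀ s', y s' = ρ₀ s' + γ * ∑ s, ∑ a, y s * π s a * P s a s' := by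
  have hs := aux_summable P γ ρ₀ π hP0 hP1 hγ0 hγ1 hρ0 hρ1 hπ0 hπ1
  refine ⟨fun s => ∑' t : ℕ, γ ^ t * stateDist P π ρ₀ t s, fun s => rfl, fun s =>
    tsum_nonneg fun t => mul_nonneg (pow_nonneg hγ0 t) (aux_sd_nonneg P ρ₀ π hP0 hρ0 hπ0 t s),
    ?_, ?_⟩
  · rw [← Summable.tsum_finsetSum (fun s _ => hs s), ← tsum_geometric_of_lt_one hγ0 hγ1]
    refine tsum_congr fun t => ?_
    rw [← Finset.mul_sum, aux_sd_sum P ρ₀ π hP1 hρ1 hπ1 t, mul_one]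
  · intro s'
    have hH : HasSum (fun t : ℕ => γ * ∑ s, ∑ a,
        (γ ^ t * stateDist P π ρ₀ t s) * π s a * P s a s')
        (γ * ∑ s, ∑ a, (∑' t : ℕ, γ ^ t * stateDist P π ρ₀ t s) * π s a * P s a s') :=
      (hasSum_sum fun s _ => hasSum_sum fun a _ =>
        (((hs s).hasSum.mul_right _).mul_right _)).mul_left γ
    show ∑' t : ℕ, γ ^ t * stateDist P π ρ₀ t s' = _
    rw [(hs s').tsum_eq_zero_add, ← hH.tsum_eq]
    congr 1
    · simp [stateDist]
    · refine tsum_congr fun t => ?_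
      simp only [stateDist, Finset.mul_sum]
      refine Finset.sum_congr rfl fun s _ => Finset.sum_congr rfl fun a _ => ?_
      ring

/-- a difference of policies integrates bounded functions to something small -/
theorem aux_abs {A : Type*} [Fintype A] (p q : A → ℝ) (f : A → ℝ) (α B : ℝ)
    (hB : ∀ a, |f a| ≤ B) (hB0 : 0 ≤ B) (h : dTV p q ≤ α) :
    |∑ a, (q a - p a) * f a| ≤ 2 * α * B := by
  have h1 : ∑ a, |p a - q a| ≤ 2 * α := by unfold dTV at h; linarith
  calc |∑ a, (q a - p a) * f a| ≤ ∑ a, |(q a - p a) * f a| := Finset.abs_sum_le_sum_abs _ _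
    _ ≤ ∑ a, |p a - q a| * B := by
        refine Finset.sum_le_sum fun a _ => ?_
        rw [abs_mul, abs_sub_comm]
        exact mul_le_mul_of_nonneg_left (hB a) (abs_nonneg _)
    _ = (∑ a, |p a - q a|) * B := by rw [Finset.sum_mul]
    _ ≤ 2 * α * B := mul_le_mul_of_nonneg_right h1 hB0

theorem aux_avg {X : Type*} [Fintype X] (p f : X → ℝ) (B : ℝ) (hp : ∀ x, 0 ≤ p x)
    (hB : ∀ x, |f x| ≤ B) : |∑ x, p x * f x| ≤ (∑ x, p x) * B := by
  rw [Finset.sum_mul]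
  refine (Finset.abs_sum_le_sum_abs _ _).trans (Finset.sum_le_sum fun x _ => ?_)
  rw [abs_mul, abs_of_nonneg (hp x)]
  exact mul_le_mul_of_nonneg_left (hB x) (hp x)

/-- quadratic surrogate-gap bound: with
`ε_max = max_{s,a} |A^π(s,a)|` and `α = D_TV^max(π,π̃)`, we have
`|η(π̃) − L_π(π̃)| ≤ 4 ε_max γ α² / (1−γ)²`. -/
theorem surrogate_gap_quadratic_bound
    {S A : Type*} [Fintype S] [Fintype A] [Nonempty S] [Nonempty A]
    (P : S → A → S → ℝ) (r : S → A → ℝ) (γ : ℝ) (ρ₀ : S → ℝ)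
    (hP0 : ∀ s a s', 0 ≤ P s a s') (hP1 : ∀ s a, ∑ s', P s a s' = 1)
    (hγ0 : 0 ≤ γ) (hγ1 : γ < 1)
    (hρ0 : ∀ s, 0 ≤ ρ₀ s) (hρ1 : ∑ s, ρ₀ s = 1)
    (π πt : S → A → ℝ)
    (hπ0 : ∀ s a, 0 ≤ π s a) (hπ1 : ∀ s, ∑ a, π s a = 1)
    (hπt0 : ∀ s a, 0 ≤ πt s a) (hπt1 : ∀ s, ∑ a, πt s a = 1)
    (V Vt : S → ℝ)
    (hV : IsBellman P r γ π V) (hVt : IsBellman P r γ πt Vt)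
    (εmax α : ℝ)
    (hε : εmax = ⨆ p : S × A, |mdpAdv P r γ V p.1 p.2|)
    (hα : α = dTVmax π πt) :
    |perf ρ₀ Vt - surrogate P r γ ρ₀ π V πt| ≤
      4 * εmax * γ * α ^ 2 / (1 - γ) ^ 2 := by
  obtain ⟨y, hy, hy0, hy1, hyfix⟩ :=
    aux_occ P γ ρ₀ π hP0 hP1 hγ0 hγ1 hρ0 hρ1 hπ0 hπ1
  have hg1 : 0 < 1 - γ := by linarith
  have hεb : ∀ s a, |mdpAdv P r γ V s a| ≤ εmax := fun s a => by
    rw [hε]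
    exact le_ciSup (f := fun p : S × A => |mdpAdv P r γ V p.1 p.2|)
      (Set.finite_range _).bddAbove (s, a)
  have hαb : ∀ s, dTV (π s) (πt s) ≤ α := fun s => by
    rw [hα]
    exact le_ciSup (f := fun s => dTV (π s) (πt s)) (Set.finite_range _).bddAbove s
  have hε0 : 0 ≤ εmax :=
    (abs_nonneg _).trans (hεb (Classical.arbitrary S) (Classical.arbitrary A))
  have hα0 : 0 ≤ α := by
    refine le_trans ?_ (hαb (Classical.arbitrary S))
    unfold dTV
    positivity
  set W : S → ℝ := fun s => Vt s - V s with hW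
  set g : S → ℝ := fun s => ∑ a, πt s a * mdpAdv P r γ V s a with hg
  have hadv : ∀ s, ∑ a, π s a * mdpAdv P r γ V s a = 0 := fun s => by
    simp only [mdpAdv, mdpQ, mul_sub, Finset.sum_sub_distrib]
    rw [← hV s, ← Finset.sum_mul, hπ1]
    ring
  have hgb : ∀ s, |g s| ≤ 2 * α * εmax := fun s => by
    have := aux_abs (π s) (πt s) (mdpAdv P r γ V s) α εmax (hεb s) hε0 (hαb s)
    simp only [sub_mul, Finset.sum_sub_distrib] at this
    rwa [hadv, sub_zero] at this
  have hWfix : ∀ s, W s = g s + γ * ∑ a, πt s a * ∑ s', P s a s' * W s' := fun s => by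
    have e : ∑ a, πt s a * V s = V s := by rw [← Finset.sum_mul, hπt1, one_mul]
    have : g s + γ * ∑ a, πt s a * ∑ s', P s a s' * W s'
        = ∑ a, πt s a * (r s a + γ * ∑ s', P s a s' * Vt s') - ∑ a, πt s a * V s := by
      simp only [hg, hW, mdpAdv, mdpQ, mul_sub (P _ _ _), Finset.sum_sub_distrib]
      rw [Finset.mul_sum, ← Finset.sum_add_distrib, ← Finset.sum_sub_distrib]
      exact Finset.sum_congr rfl fun a _ => by ring
    rw [this, e, ← hVt s]
  obtain ⟨s0, hs0⟩ := Finite.exists_max fun s => |W s|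
  have hPW : ∀ s a, |∑ s', P s a s' * W s'| ≤ |W s0| := fun s a => by
    have := aux_avg (P s a) W _ (hP0 s a) hs0
    rwa [hP1, one_mul] at this
  have hWb : |W s0| ≤ 2 * α * εmax / (1 - γ) := by
    have h1 := aux_avg (πt s0) (fun a => ∑ s', P s0 a s' * W s') _ (hπt0 s0) (hPW s0)
    rw [hπt1, one_mul] at h1
    have h2 : |W s0| ≤ |g s0| + γ * |W s0| := by
      calc |W s0| = |g s0 + γ * ∑ a, πt s0 a * ∑ s', P s0 a s' * W s'| := by rw [← hWfix]
        _ ≤ _ := (abs_add_le _ _).trans (by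
          rw [abs_mul γ, abs_of_nonneg hγ0]
          gcongr)
    rw [le_div_iff₀ hg1]
    linarith [hgb s0]
  have hgap : perf ρ₀ Vt - surrogate P r γ ρ₀ π V πt
      = γ * ∑ s, y s * ∑ a, (πt s a - π s a) * ∑ s', P s a s' * W s' := by
    have e1 : (1 / (1 - γ)) * ∑ s, visitFreq P π ρ₀ γ s * g s = ∑ s, y s * g s := by
      rw [Finset.mul_sum]
      refine Finset.sum_congr rfl fun s _ => ?_
      rw [hy]
      field_simp
    have e2 : perf ρ₀ Vt - perf ρ₀ V = ∑ s, ρ₀ s * W s := by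
      simp only [perf, hW, mul_sub, Finset.sum_sub_distrib]
    have e3 : ∑ s', y s' * W s' = ∑ s, ρ₀ s * W s
        + γ * ∑ s, y s * ∑ a, π s a * ∑ s', P s a s' * W s' := by
      have : ∑ s, y s * ∑ a, π s a * ∑ s', P s a s' * W s'
          = ∑ s', (∑ s, ∑ a, y s * π s a * P s a s') * W s' := by
        simp only [Finset.mul_sum, Finset.sum_mul]
        conv_rhs => rw [Finset.sum_comm]
        refine Finset.sum_congr rfl fun s _ => ?_
        conv_rhs => rw [Finset.sum_comm]
        refine Finset.sum_congr rfl fun a _ => Finset.sum_congr rfl fun s' _ => ?_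
        ring
      rw [this, Finset.mul_sum, ← Finset.sum_add_distrib]
      refine Finset.sum_congr rfl fun s _ => ?_
      conv_lhs => rw [hyfix s]
      ring
    have e4 : ∑ s, y s * W s = ∑ s, y s * g s
        + γ * ∑ s, y s * ∑ a, πt s a * ∑ s', P s a s' * W s' := by
      rw [Finset.mul_sum, ← Finset.sum_add_distrib]
      refine Finset.sum_congr rfl fun s _ => ?_
      conv_lhs => rw [hWfix s]
      ring
    have e5 : perf ρ₀ Vt - surrogate P r γ ρ₀ π V πt
        = ∑ s, ρ₀ s * W s - ∑ s, y s * g s := by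
      rw [← e1, ← e2]
      simp only [surrogate, hg]
      ring
    rw [e5]
    simp only [sub_mul, mul_sub, Finset.sum_sub_distrib]
    linarith
  rw [hgap, abs_mul, abs_of_nonneg hγ0]
  have hfin := aux_avg y (fun s => ∑ a, (πt s a - π s a) * ∑ s', P s a s' * W s')
    (2 * α * (2 * α * εmax / (1 - γ))) hy0 (fun s =>
      aux_abs (π s) (πt s) _ α _ (fun a => (hPW s a).trans hWb) (by positivity) (hαb s))
  rw [hy1] at hfin
  refine (mul_le_mul_of_nonneg_left hfin hγ0).trans (le_of_eq ?_)
  field_simp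
  ring
end
end
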